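/- (Skryabin) Let H be a Hopf algebra over a field k which is Noetherian as a ring. Then the antipode S : H → H is injective. -/

import Mathlib

/-!
Let `W` be a finite-dimensional subspace of `H` with `(S ⊗ id) Δ W ⊆ H ⊗ W`. The `H`-linear map
`G : x ⊗ y ↦ x y₁ ⊗ y₂` on `H ⊗ H` satisfies `G (S w₁ ⊗ w₂) = 1 ⊗ w`, so `H ⊗ W ⊆ G (H ⊗ W)`.
Here `H ⊗ W` is a free direct summand of `H ⊗ H`, generated over `H` by as many elements as
`G (H ⊗ W)`. A Noetherian ring is stably finite, i.e. one-sided inverses of square matrices are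
two-sided, and this forces `G (H ⊗ W) = H ⊗ W`; in particular `Δ W ⊆ H ⊗ W`.

By the finiteness theorem for coalgebras every element of `H` lies in a finite-dimensional `V` with
`Δ V ⊆ H ⊗ V`. The above applies to `W = V ∩ ker S`, because `S w₂ ⊗ S w₁ = Δ (S w) = 0` for
`w ∈ W`. Since moreover `ε = ε ∘ S` vanishes on `W`, the counit axiom gives `W = 0`.
-/

open scoped TensorProduct
open Coalgebra HopfAlgebra Submodule WithConv

section StablyFinite

variable {R E ι : Type*} [Ring R] [IsStablyFiniteRing R] [AddCommGroup E] [Module R E] [Finite ι]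
  [DecidableEq ι]

lemma span_range_eq_of_span_range_le {e t : ι → E} (ψ : E →ₗ[R] ι → R)
    (hψ : ∀ i, ψ (e i) = Pi.single i 1) (h : span R (Set.range e) ≤ span R (Set.range t)) :
    span R (Set.range e) = span R (Set.range t) := by
  cases nonempty_fintype ι
  have het (i) : ∃ c : ι → R, ∑ j, c j • t j = e i :=
    mem_span_range_iff_exists_fun R |>.1 <| h <| subset_span ⟨i, rfl⟩
  choose c hc using het
  let X : Matrix ι ι R := Matrix.of fun j ↦ ψ (t j)
  let Y : Matrix ι ι R := Matrix.of c
  have hYX : Y * X = 1 := by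
    ext i j
    simpa [X, Y, Matrix.mul_apply, hψ, Matrix.one_eq_pi_single] using congr(ψ $(hc i) j)
  have hXY : X * Y = 1 := mul_eq_one_symm hYX
  refine h.antisymm <| span_le.2 ?_
  rintro _ ⟨j, rfl⟩
  refine mem_span_range_iff_exists_fun R |>.2 ⟨X j, ?_⟩
  calc ∑ i, X j i • e i
    _ = ∑ l, (X * Y) j l • t l := by
      simp only [← hc, Finset.smul_sum, Matrix.mul_apply, Finset.sum_smul, mul_smul]
      exact Finset.sum_comm
    _ = t j := by simp [hXY, Matrix.one_apply]

end StablyFinite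

section Slices

variable {R M M' N P : Type*} [CommSemiring R] [AddCommMonoid M] [Module R M] [AddCommMonoid M']
  [Module R M'] [AddCommMonoid N] [Module R N] [AddCommMonoid P] [Module R P]

lemma rTensor_mem_range_lTensor_subtype (g : M →ₗ[R] M') {V : Submodule R N} {t : M ⊗[R] N}
    (ht : t ∈ LinearMap.range (V.subtype.lTensor M)) :
    g.rTensor N t ∈ LinearMap.range (V.subtype.lTensor M') := by
  obtain ⟨s, rfl⟩ := ht
  refine ⟨g.rTensor V s, ?_⟩
  rw [← LinearMap.comp_apply, ← LinearMap.comp_apply, LinearMap.lTensor_comp_rTensor,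
    LinearMap.rTensor_comp_lTensor]

lemma map_lid_rTensor (f : N →ₗ[R] P) (φ : Module.Dual R M) (t : M ⊗[R] N) :
    f (TensorProduct.lid R N (φ.rTensor N t)) =
      TensorProduct.lid R P (φ.rTensor P (f.lTensor M t)) := by
  induction t with
  | zero => simp
  | add t u ht hu => simp only [map_add, ht, hu]
  | tmul x y => simp

/- With `t = ∑ᵢ bᵢ ⊗ nᵢ` in a basis `b` of `M`, the `nᵢ` are slices of `t` and span such a `V`. -/
lemma exists_finite_mem_range_lTensor_subtype [Module.Free R M] (t : M ⊗[R] N) :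
    ∃ V : Submodule R N, Module.Finite R V ∧ t ∈ LinearMap.range (V.subtype.lTensor M) ∧
      ∀ v ∈ V, ∃ φ : Module.Dual R M, TensorProduct.lid R N (φ.rTensor N t) = v := by
  classical
  let b := Module.Free.chooseBasis R M
  let n := TensorProduct.equivFinsuppOfBasisLeft (N := N) b t
  have ht : n.sum (fun i y ↦ b i ⊗ₜ[R] y) = t := by
    rw [← TensorProduct.equivFinsuppOfBasisLeft_symm_apply, LinearEquiv.symm_apply_apply]
  let slice : Module.Dual R M →ₗ[R] N :=
    TensorProduct.lid R N ∘ₗ LinearMap.applyₗ t ∘ₗ LinearMap.rTensorHom N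
  have hslice (i) : slice (b.coord i) = n i :=
    (TensorProduct.equivFinsuppOfBasisLeft_apply b t i).symm
  refine ⟨span R (n.support.image n), inferInstance, ?_, ?_⟩
  · rw [← ht]
    refine sum_mem fun i hi ↦ ⟨b i ⊗ₜ ⟨n i, subset_span ?_⟩, rfl⟩
    exact Finset.mem_image_of_mem n hi
  · suffices span R (n.support.image n : Set N) ≤ LinearMap.range slice from fun v hv ↦ this hv
    refine span_le.2 fun v hv ↦ ?_
    obtain ⟨i, -, rfl⟩ := Finset.mem_image.1 hv
    exact ⟨b.coord i, hslice i⟩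

end Slices

section Flat

variable {R M N P : Type*} [CommRing R] [AddCommGroup M] [Module R M] [Module.Flat R M]
  [AddCommGroup N] [Module R N] [AddCommGroup P] [Module R P]

lemma mem_range_lTensor_subtype_inf_ker {V : Submodule R N} {f : N →ₗ[R] P} {t : M ⊗[R] N}
    (ht : t ∈ LinearMap.range (V.subtype.lTensor M)) (hf : f.lTensor M t = 0) :
    t ∈ LinearMap.range ((V ⊓ LinearMap.ker f).subtype.lTensor M) := by
  obtain ⟨s, rfl⟩ := ht
  let g : V →ₗ[R] P := f ∘ₗ V.subtype
  rw [← LinearMap.lTensor_comp_apply] at hf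
  have hexact := Module.Flat.lTensor_exact M g.exact_subtype_ker_map
  obtain ⟨r, rfl⟩ := (hexact s).1 hf
  let ι : LinearMap.ker g →ₗ[R] (V ⊓ LinearMap.ker f : Submodule R N) :=
    (V.subtype ∘ₗ (LinearMap.ker g).subtype).codRestrict _ fun x ↦ ⟨x.1.2, x.2⟩
  have hι : (V ⊓ LinearMap.ker f).subtype ∘ₗ ι = V.subtype ∘ₗ (LinearMap.ker g).subtype := rfl
  exact ⟨ι.lTensor M r, by rw [← LinearMap.lTensor_comp_apply, hι, LinearMap.lTensor_comp_apply]⟩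

end Flat

section BaseChange

variable {R ι M : Type*} (A : Type*) [CommSemiring R] [Semiring A] [Algebra R A] [AddCommMonoid M]
  [Module R M]

lemma baseChange_eq_span_range_basis {p : Submodule R M} (b : Module.Basis ι R p) :
    p.baseChange A = span A (Set.range fun i ↦ (1 : A) ⊗ₜ[R] (b i : M)) := by
  rw [baseChange, LinearMap.range_eq_map, ← (b.baseChange A).span_eq, map_span, ← Set.range_comp]
  congr! 2
  ext i
  simp

end BaseChange

section LeftCoideal

variable {R C : Type*} [CommSemiring R] [AddCommMonoid C] [Module R C] [Coalgebra R C]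

/-- A left coideal of a coalgebra `C`: a submodule `V` with `Δ V ⊆ C ⊗ V`, where `C ⊗ V` stands for
its image in `C ⊗ C`. -/
def IsLeftCoideal (V : Submodule R C) : Prop :=
  ∀ v ∈ V, comul (R := R) v ∈ LinearMap.range (V.subtype.lTensor C)

lemma IsLeftCoideal.eq_bot_of_le_ker_counit {V : Submodule R C} (hV : IsLeftCoideal V)
    (hε : V ≤ LinearMap.ker (counit (R := R) (A := C))) : V = ⊥ := by
  refine (Submodule.eq_bot_iff V).2 fun v hv ↦ ?_
  obtain ⟨t, ht⟩ := hV v hv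
  have hεV : counit ∘ₗ V.subtype = 0 := by ext w; exact hε w.2
  calc v = TensorProduct.rid R C (counit.lTensor C (comul (R := R) v)) := by simp
    _ = TensorProduct.rid R C ((counit ∘ₗ V.subtype).lTensor C t) := by
      rw [← ht, LinearMap.lTensor_comp_apply]
    _ = 0 := by simp [hεV]

lemma exists_finite_isLeftCoideal_mem [Module.Free R C] (c : C) :
    ∃ V : Submodule R C, Module.Finite R V ∧ IsLeftCoideal V ∧ c ∈ V := by
  obtain ⟨V, hfin, ⟨t, ht⟩, hV⟩ := exists_finite_mem_range_lTensor_subtype (comul (R := R) c)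
  refine ⟨V, hfin, fun v hv ↦ ?_, ?_⟩
  · obtain ⟨φ, rfl⟩ := hV v hv
    let slice : C ⊗[R] C →ₗ[R] C := TensorProduct.lid R C ∘ₗ φ.rTensor C
    have hslice (u : C ⊗[R] C ⊗[R] C) : slice.rTensor C u =
        TensorProduct.lid R (C ⊗[R] C) (φ.rTensor (C ⊗[R] C) (TensorProduct.assoc R C C C u)) := by
      have : slice.rTensor C = TensorProduct.lid R (C ⊗[R] C) ∘ₗ φ.rTensor (C ⊗[R] C) ∘ₗ
          (TensorProduct.assoc R C C C).toLinearMap := by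
        ext
        simp [slice, TensorProduct.smul_tmul']
      exact congr($this u)
    have hcomul : comul (TensorProduct.lid R C (φ.rTensor C (comul c))) =
        (slice ∘ₗ comul).rTensor C (comul c) := by
      rw [map_lid_rTensor, LinearMap.rTensor_comp_apply, hslice, coassoc_apply]
    exact hcomul ▸ rTensor_mem_range_lTensor_subtype _ ⟨t, ht⟩
  · have : c = TensorProduct.lid R V (counit.rTensor V t) := by
      simpa [ht] using (map_lid_rTensor V.subtype counit t).symm
    exact this ▸ coe_mem _

end LeftCoideal

section ConvolutionInverse

variable {R H A : Type*} [CommSemiring R] [Semiring H] [HopfAlgebra R H] [Semiring A] [Algebra R A]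

lemma toConv_algHom_comp_antipode_mul (f : H →ₐ[R] A) :
    toConv (f.toLinearMap ∘ₗ antipode R) * toConv f.toLinearMap = 1 := by
  have h := LinearMap.algHom_comp_convMul_distrib f (toConv (antipode R)) (toConv LinearMap.id)
  rw [LinearMap.antipode_mul_id] at h
  refine WithConv.ext <| h.symm.trans ?_
  ext
  simp

lemma comul_comp_antipode :
    comul ∘ₗ antipode R =
      TensorProduct.map (antipode R) (antipode R) ∘ₗ (TensorProduct.comm R H H).toLinearMap ∘ₗ
        comul := by
  let ι₁ : H →ₐ[R] H ⊗[R] H := Algebra.TensorProduct.includeLeft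
  let ι₂ : H →ₐ[R] H ⊗[R] H := Algebra.TensorProduct.includeRight
  have hcomul : toConv comul = toConv ι₁.toLinearMap * toConv ι₂.toLinearMap := by
    ext a
    simpa [(ℛ R a).convMul_apply, ι₁, ι₂] using (ℛ R a).eq.symm
  have hflip :
      toConv (TensorProduct.map (antipode R) (antipode R) ∘ₗ
        (TensorProduct.comm R H H).toLinearMap ∘ₗ comul) =
      toConv (ι₂.toLinearMap ∘ₗ antipode R) * toConv (ι₁.toLinearMap ∘ₗ antipode R) := by
    ext a
    simp [(ℛ R a).convMul_apply, ι₁, ι₂, ← (ℛ R a).eq]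
  refine toConv_injective (left_inv_eq_right_inv ?_ LinearMap.comul_right_inv).symm
  rw [hflip, hcomul, mul_assoc, ← mul_assoc _ (toConv ι₁.toLinearMap),
    toConv_algHom_comp_antipode_mul, one_mul, toConv_algHom_comp_antipode_mul]

end ConvolutionInverse

section GaloisMap

variable (R H : Type*) [CommSemiring R] [Semiring H]

/-- The canonical Galois map `x ⊗ y ↦ x y₁ ⊗ y₂` of a bialgebra, as a map of left modules. -/
noncomputable def galoisMap [Bialgebra R H] : H ⊗[R] H →ₗ[H] H ⊗[R] H :=
  TensorProduct.AlgebraTensorModule.lift <|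
    LinearMap.toSpanSingleton H (H →ₗ[R] H ⊗[R] H) comul

lemma galoisMap_tmul [Bialgebra R H] (x y : H) :
    galoisMap R H (x ⊗ₜ y) = x • comul (R := R) y := rfl

lemma galoisMap_rTensor_antipode_comul [HopfAlgebra R H] (a : H) :
    galoisMap R H ((antipode R).rTensor H (comul a)) = 1 ⊗ₜ a := by
  have hG (t : H ⊗[R] H) : galoisMap R H ((antipode R).rTensor H t) =
      (LinearMap.mul' R H ∘ₗ (antipode R).rTensor H).rTensor H
        ((TensorProduct.assoc R H H H).symm (comul.lTensor H t)) := by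
    induction t with
    | zero => simp
    | add t u ht hu => simp only [map_add, ht, hu]
    | tmul x y =>
      simp only [LinearMap.rTensor_tmul, LinearMap.lTensor_tmul, galoisMap_tmul]
      induction comul (R := R) y with
      | zero => simp
      | add t u ht hu => simp only [smul_add, TensorProduct.tmul_add, map_add, ht, hu]
      | tmul y₁ y₂ => simp [TensorProduct.smul_tmul']
  rw [hG, coassoc_symm_apply, ← LinearMap.rTensor_comp_apply, LinearMap.comp_assoc,
    mul_antipode_rTensor_comul, LinearMap.rTensor_comp_apply, rTensor_counit_comul]
  simp

end GaloisMap

section KerAntipode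

variable {k H : Type*} [Field k] [Ring H] [HopfAlgebra k H]

lemma IsLeftCoideal.of_rTensor_antipode_comul_mem [IsStablyFiniteRing H] {W : Submodule k H}
    [Module.Finite k W] (hW : ∀ w ∈ W, (antipode k).rTensor H (comul w) ∈
      LinearMap.range (W.subtype.lTensor H)) : IsLeftCoideal W := by
  let b := Module.finBasis k W
  let e (i) : H ⊗[k] H := 1 ⊗ₜ b i
  have hspan : W.baseChange H = span H (Set.range e) := baseChange_eq_span_range_basis H b
  obtain ⟨q, hq⟩ := W.subtype.exists_leftInverse_of_injective W.ker_subtype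
  let ψ : H ⊗[k] H →ₗ[H] Fin (Module.finrank k W) → H :=
    (b.baseChange H).equivFun.toLinearMap ∘ₗ q.baseChange H
  have hψ (i) : ψ (e i) = Pi.single i 1 := by
    have hqi : q (b i) = b i := congr($hq (b i))
    ext j
    simp [ψ, e, hqi, Module.Basis.baseChange_repr_tmul, Pi.single_apply, Finsupp.single_apply,
      eq_comm]
  have hle : span H (Set.range e) ≤ span H (Set.range (galoisMap k H ∘ e)) := by
    rw [Set.range_comp, ← map_span, span_le]
    rintro _ ⟨i, rfl⟩
    exact ⟨_, hspan ▸ hW _ (b i).2, galoisMap_rTensor_antipode_comul k H _⟩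
  have heq := span_range_eq_of_span_range_le ψ hψ hle
  intro w hw
  have hwe : galoisMap k H (1 ⊗ₜ w) ∈ span H (Set.range e) := by
    rw [heq, Set.range_comp, ← map_span, ← hspan]
    exact mem_map_of_mem (tmul_mem_baseChange_of_mem 1 hw)
  rwa [galoisMap_tmul, one_smul, ← hspan] at hwe

lemma IsLeftCoideal.inf_ker_antipode [IsStablyFiniteRing H] {V : Submodule k H}
    [Module.Finite k V] (hV : IsLeftCoideal V) :
    IsLeftCoideal (V ⊓ LinearMap.ker (antipode k (A := H))) := by
  refine .of_rTensor_antipode_comul_mem fun w hw ↦ ?_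
  refine mem_range_lTensor_subtype_inf_ker (rTensor_mem_range_lTensor_subtype _ (hV w hw.1)) ?_
  refine (TensorProduct.comm k H H).injective ?_
  calc TensorProduct.comm k H H ((antipode k).lTensor H ((antipode k).rTensor H (comul w)))
    _ = TensorProduct.comm k H H
        (TensorProduct.map (antipode k) (antipode k) (comul (R := k) w)) := by
      rw [← LinearMap.comp_apply, LinearMap.lTensor_comp_rTensor]
    _ = comul (antipode k w) := by
      rw [← TensorProduct.map_comm]
      exact congr($comul_comp_antipode w).symm
    _ = TensorProduct.comm k H H 0 := by rw [hw.2, map_zero, map_zero]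

end KerAntipode

theorem antipode_injective_of_noetherian_general (k : Type*) [Field k]
    (H : Type*) [Ring H] [HopfAlgebra k H] [IsStablyFiniteRing H] :
    Function.Injective (HopfAlgebra.antipode (R := k) (A := H)) := by
  refine (injective_iff_map_eq_zero _).2 fun h hh ↦ ?_
  obtain ⟨V, _, hV, hhV⟩ := exists_finite_isLeftCoideal_mem (R := k) h
  have hcounit : V ⊓ LinearMap.ker (antipode k) ≤ LinearMap.ker (counit (R := k) (A := H)) :=
    fun w hw ↦ by rw [LinearMap.mem_ker, ← counit_antipode, hw.2, map_zero]
  have hbot := hV.inf_ker_antipode.eq_bot_of_le_ker_counit hcounit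
  exact (mem_bot k).1 <| hbot ▸ ⟨hhV, hh⟩

/-- (Skryabin) The antipode of a Noetherian Hopf algebra is injective. -/
theorem antipode_injective_of_noetherian (k : Type*) [Field k]
    (H : Type*) [Ring H] [HopfAlgebra k H] [IsNoetherianRing H] :
    Function.Injective (HopfAlgebra.antipode (R := k) (A := H)) :=
  antipode_injective_of_noetherian_general k H
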